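/- arXiv:2503.18920 — 2 statements merged into one kernel-verified Lean document; each statement's English description precedes it below -/
import Mathlib

section
/- Suppose 2 ≤ k ≤ n are integers and f : V(P_n) → {1,...,k} is a k-color weak maximizer of the Wiener index W on P_n. Then W(f) = min{ W(f') : f' a k-color weak maximizer of W on P_n } if and only if the numbers of vertices in any two color classes of f differ by at most one. -/
open SimpleGraph Finset

/-- The cycle graph on vertex set `ZMod n`, with an edge between `i` and `i+1` (mod `n`). -/
def cycleGraphZMod (n : ℕ) : SimpleGraph (ZMod n) :=
  SimpleGraph.fromRel (fun u v => v = u + 1)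

/-- The Wiener index of a set of vertices: the sum of all pairwise geodesic distances. -/
noncomputable def wienerSet {V : Type*} [Fintype V] [DecidableEq V]
    (G : SimpleGraph V) (A : Finset V) : ℕ :=
  (∑ p ∈ A.offDiag, G.dist p.1 p.2) / 2

/-- `A` is a maximizer of `W` on `G`. -/
def IsWienerMaximizer {V : Type*} [Fintype V] [DecidableEq V]
    (G : SimpleGraph V) (A : Finset V) : Prop :=
  ∀ B : Finset V, B.card = A.card → wienerSet G B ≤ wienerSet G A

/-- `A ⊆ V(C_n)` is almost good. -/
def AlmostGood (n : ℕ) (A : Finset (ZMod n)) : Prop :=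
  A.card = 1 ∨ A.card = n - 1 ∨
    ∃ c₁ c₂ : ((cycleGraphZMod n).induce (↑A : Set (ZMod n))).ConnectedComponent,
      c₁ ≠ c₂ ∧ (∀ c, c = c₁ ∨ c = c₂) ∧
      (c₁.supp.ncard : ℤ) - (c₂.supp.ncard : ℤ) ≤ 1 ∧
      (c₂.supp.ncard : ℤ) - (c₁.supp.ncard : ℤ) ≤ 1

/-- `A ⊆ V(C_n)` is good: both `A` and its complement are almost good. -/
def GoodSet (n : ℕ) [NeZero n] (A : Finset (ZMod n)) : Prop :=
  AlmostGood n A ∧ AlmostGood n (Finset.univ \ A)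

/-- The color class of color `i` for the coloring `f`. -/
def colorClass {V : Type*} [Fintype V] {k : ℕ} (f : V → Fin k) (i : Fin k) : Finset V :=
  Finset.univ.filter (fun v => f v = i)

/-- The Wiener index of a coloring: the sum of the Wiener indices of its color classes. -/
noncomputable def wienerColoring {V : Type*} [Fintype V] [DecidableEq V] {k : ℕ}
    (G : SimpleGraph V) (f : V → Fin k) : ℕ :=
  ∑ i : Fin k, wienerSet G (colorClass f i)

/-- The type of a coloring, as the multiset of cardinalities of its color classes
(equality of multisets is equality of the nondecreasing rearrangements). -/
def colorType {V : Type*} [Fintype V] {k : ℕ} (f : V → Fin k) : Multiset ℕ :=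
  (Finset.univ : Finset (Fin k)).val.map (fun i => (colorClass f i).card)

/-- `f` is a `k`-color weak maximizer of `W` on `G`. -/
def IsWeakMaximizer {V : Type*} [Fintype V] [DecidableEq V] {k : ℕ}
    (G : SimpleGraph V) (f : V → Fin k) : Prop :=
  Function.Surjective f ∧ ∀ g : V → Fin k, Function.Surjective g →
    colorType g = colorType f → wienerColoring G g ≤ wienerColoring G f

/-- The coloring obtained from `f` by swapping the colors of `u` and `v`. -/
def swapColors {V α : Type*} [DecidableEq V] (f : V → α) (u v : V) : V → α :=
  f ∘ Equiv.swap u v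

/-- `f` is a `k`-color local weak maximizer of `W` on `G`. -/
def IsLocalWeakMaximizer {V : Type*} [Fintype V] [DecidableEq V] {k : ℕ}
    (G : SimpleGraph V) (f : V → Fin k) : Prop :=
  Function.Surjective f ∧ ∀ u v : V, G.Adj u v →
    wienerColoring G (swapColors f u v) ≤ wienerColoring G f

/-- The number of vertices to the left of `u` in the path that get the same color as `u`. -/
def leftCount {n k : ℕ} (f : Fin n → Fin k) (u : Fin n) : ℕ :=
  (Finset.univ.filter (fun w => w < u ∧ f w = f u)).card

/-- The number of vertices to the right of `u` in the path that get the same color as `u`. -/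
def rightCount {n k : ℕ} (f : Fin n → Fin k) (u : Fin n) : ℕ :=
  (Finset.univ.filter (fun w => u < w ∧ f w = f u)).card

/-- The sum of the `j` largest entries of a multiset of naturals. -/
def sumLargest (s : Multiset ℕ) (j : ℕ) : ℕ :=
  (((s.sort (· ≤ ·)).reverse).take j).sum

/-- `x ≺ y` : `x` is majorized by `y`. -/
def MajorizedBy (x y : Multiset ℕ) : Prop :=
  x.card = y.card ∧ x.sum = y.sum ∧ ∀ j, sumLargest x j ≤ sumLargest y j

/-- The reverse Robin Hood transfer `R_{j,j'}` applied to the (sorted) list `t`,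
with `j ≤ j'` zero-indexed: subtract `1` from the `j`-th entry and add `1` to the `j'`-th
entry; the result is recorded as a multiset (i.e. up to rearrangement). -/
def rhTransfer (t : List ℕ) (j j' : ℕ) : Multiset ℕ :=
  ↑((t.set j (t.getD j 0 - 1)).set j' ((t.set j (t.getD j 0 - 1)).getD j' 0 + 1))

/-- `t(n,k)` : the unique nondecreasing `k`-tuple of positive integers summing to `n`
whose entries pairwise differ by at most one, as a multiset. -/
def equitableType (n k : ℕ) : Multiset ℕ :=
  Multiset.replicate (k - n % k) (n / k) + Multiset.replicate (n % k) (n / k + 1)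

/-- One step of the operation `R`: `s ∈ R({t})`, i.e. `s = t` or `s` is obtained from `t` by
a reverse Robin Hood transfer between two entries that are equal and even. -/
def REstep (t s : Multiset ℕ) : Prop :=
  s = t ∨ ∃ m : ℕ, Even m ∧ 2 ≤ t.count m ∧
    s = (t - Multiset.replicate 2 m) + {m - 1, m + 1}

/-- `s ∈ R^∞({t(n,k)})`. -/
def InRInfty (n k : ℕ) (s : Multiset ℕ) : Prop :=
  Relation.ReflTransGen REstep (equitableType n k) s

/-!
For a coloring `f` of the path, `W(f) = ∑ v, v * s(v)`, where the skew `s(v)` counts the vertices of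
the color of `v` on its left minus those on its right. Exchanging two different colors at adjacent
vertices merely exchanges their skews, so the skew of a weak maximizer is monotone. In a color class
of size `c` the skews are `1 - c, 3 - c, …, c - 1`; hence the layers `{t < s}` and `{s < -t}` have
the same size `M t = ∑ᵢ ⌊(cᵢ - t)⁺ / 2⌋`, and by monotonicity they are a final and an initial
segment of the path. Summing over the layers gives `W(f) = ∑ₜ M t * (n - M t)`, which depends only
on the type of `f`.

To compare an equitable `c` with an arbitrary `d`, linearize `x ↦ x * (n - x)` at the layer sizes of
`d`. The resulting weights `w t` are nonnegative and increasing in `t`, so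
`m ↦ ∑ₜ w t * ⌊(m - t)⁺ / 2⌋` is convex, and a sum of values of a convex function is smallest for
equitable arguments. The error of the linearization is `∑ₜ (M_d t - M_c t)²`, so in the case of
equality all layer sizes agree, and these force `d` to be equitable.
-/

section Convexity

variable {R : Type*} [CommRing R] [LinearOrder R] [IsStrictOrderedRing R]

lemma add_mul_sub_le_of_monotone_increments {h : ℕ → R}
    (hh : Monotone fun m ↦ h (m + 1) - h m) (q x : ℕ) :
    h q + (h (q + 1) - h q) * (x - q) ≤ h x := by
  rcases le_total q x with hqx | hxq
  · induction x, hqx using Nat.le_induction with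
    | base => simp
    | succ x hqx ih =>
      have hslope : h (q + 1) - h q ≤ h (x + 1) - h x := hh hqx
      push_cast
      linarith
  · induction hxq using Nat.decreasingInduction with
    | self => simp
    | of_succ x hxq ih =>
      have hslope : h (x + 1) - h x ≤ h (q + 1) - h q := hh hxq.le
      push_cast at ih
      linarith

lemma sum_comp_le_sum_comp_of_equitable {ι : Type*} [Fintype ι]
    {h : ℕ → R} (hh : Monotone fun m ↦ h (m + 1) - h m) {c d : ι → ℕ}
    (hc : ∀ i j, c i ≤ c j + 1) (hsum : ∑ i, c i = ∑ i, d i) :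
    ∑ i, h (c i) ≤ ∑ i, h (d i) := by
  obtain ⟨q, hq⟩ := Set.equitableOn_iff_exists_eq_eq_add_one.1
    (fun i j _ _ ↦ hc i j : Set.univ.EquitableOn c)
  have hline (i : ι) : h (c i) = h q + (h (q + 1) - h q) * (c i - q) := by
    rcases hq i trivial with hi | hi <;> simp [hi]
  have hsum' : ∑ i, (c i : R) = ∑ i, (d i : R) := mod_cast hsum
  calc ∑ i, h (c i) = ∑ i, (h q + (h (q + 1) - h q) * (c i - q)) := by simp only [hline]
    _ = ∑ i, (h q + (h (q + 1) - h q) * (d i - q)) := by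
      simp only [sum_add_distrib, ← mul_sum, sum_sub_distrib, hsum']
    _ ≤ ∑ i, h (d i) := sum_le_sum fun i _ ↦ add_mul_sub_le_of_monotone_increments hh q (d i)

/-- The sum `∑ₜ w t * ⌊(m - t) / 2⌋`: the contribution of a color class of size `m` to a weighted
sum of the numbers `halfExcess c t`. -/
def weightedHalves (w : ℕ → ℤ) (m : ℕ) : ℤ :=
  ∑ t ∈ range m, w t * ((m - t) / 2 : ℕ)

lemma weightedHalves_eq_sum_range (w : ℕ → ℤ) {m N : ℕ} (h : m ≤ N) :
    weightedHalves w m = ∑ t ∈ range N, w t * ((m - t) / 2 : ℕ) := by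
  refine sum_subset (range_mono h) fun t _ ht ↦ ?_
  rw [mem_range, not_lt] at ht
  simp [Nat.sub_eq_zero_of_le ht]

lemma weightedHalves_add_two (w : ℕ → ℤ) (m : ℕ) :
    weightedHalves w (m + 2) = weightedHalves w m + ∑ t ∈ range (m + 1), w t := by
  have hlast : (m + 2 - (m + 1)) / 2 = 0 := by omega
  rw [weightedHalves_eq_sum_range w m.le_succ, weightedHalves, sum_range_succ, hlast,
    Nat.cast_zero, mul_zero, add_zero, ← sum_add_distrib]
  refine sum_congr rfl fun t ht ↦ ?_
  have hstep : (m + 2 - t) / 2 = (m - t) / 2 + 1 := by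
    have := mem_range.1 ht
    omega
  rw [hstep]
  push_cast
  ring

/-- The second differences of `weightedHalves w` are the alternating sums
`w m - w (m - 1) + w (m - 2) - ⋯`. -/
lemma weightedHalves_second_difference_mem_Icc {w : ℕ → ℤ} (hw : Monotone w) (h0 : 0 ≤ w 0)
    (m : ℕ) :
    weightedHalves w (m + 2) - 2 * weightedHalves w (m + 1) + weightedHalves w m
      ∈ Set.Icc 0 (w m) := by
  induction m with
  | zero => simpa [weightedHalves, sum_range_succ] using h0
  | succ m ih =>
    have halternate := weightedHalves_add_two w (m + 1)
    rw [sum_range_succ] at halternate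
    have hprev := weightedHalves_add_two w m
    have hmono := hw m.le_succ
    constructor <;> linarith [ih.1, ih.2]

lemma monotone_weightedHalves_increments {w : ℕ → ℤ} (hw : Monotone w) (h0 : 0 ≤ w 0) :
    Monotone fun m ↦ weightedHalves w (m + 1) - weightedHalves w m :=
  monotone_nat_of_le_succ fun m ↦ by
    linarith [(weightedHalves_second_difference_mem_Icc hw h0 m).1]

end Convexity

section HalfExcess

variable {ι : Type*} [Fintype ι]

/-- For a coloring of a path with class sizes `c`, the number of vertices of skew greater
than `t`; by symmetry also the number of those of skew less than `-t`. The subtraction is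
truncated: classes of size at most `t` contribute nothing. -/
def halfExcess (c : ι → ℕ) (t : ℕ) : ℕ :=
  ∑ i, (c i - t) / 2

/-- The Wiener index of a coloring of a path with class sizes `c` whose skew is monotone. -/
def monotoneWiener (c : ι → ℕ) : ℤ :=
  ∑ t ∈ range (∑ i, c i), (halfExcess c t : ℤ) * ((∑ i, c i : ℕ) - halfExcess c t)

lemma antitone_halfExcess (c : ι → ℕ) : Antitone (halfExcess c) := fun _ _ hst ↦
  sum_le_sum fun _ _ ↦ by gcongr

lemma two_mul_halfExcess_le (c : ι → ℕ) (t : ℕ) : 2 * halfExcess c t ≤ ∑ i, c i := by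
  rw [halfExcess, mul_sum]
  exact sum_le_sum fun i _ ↦ by omega

lemma halfExcess_eq_zero_of_sum_le {c : ι → ℕ} {t : ℕ} (h : ∑ i, c i ≤ t) :
    halfExcess c t = 0 :=
  sum_eq_zero fun i _ ↦ by
    have := single_le_sum_of_canonicallyOrdered (f := c) (mem_univ i)
    omega

lemma sum_mul_halfExcess (w : ℕ → ℤ) (c : ι → ℕ) :
    ∑ t ∈ range (∑ i, c i), w t * halfExcess c t = ∑ i, weightedHalves w (c i) := by
  simp only [halfExcess, Nat.cast_sum, mul_sum]
  rw [sum_comm]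
  exact sum_congr rfl fun i _ ↦ (weightedHalves_eq_sum_range w
    (single_le_sum_of_canonicallyOrdered (mem_univ i))).symm

lemma sum_mul_halfExcess_le_of_equitable {w : ℕ → ℤ} (hw : Monotone w) (h0 : 0 ≤ w 0)
    {c d : ι → ℕ} (hc : ∀ i j, c i ≤ c j + 1) (hsum : ∑ i, c i = ∑ i, d i) :
    ∑ t ∈ range (∑ i, c i), w t * halfExcess c t
      ≤ ∑ t ∈ range (∑ i, c i), w t * halfExcess d t := by
  rw [sum_mul_halfExcess, hsum, sum_mul_halfExcess]
  exact sum_comp_le_sum_comp_of_equitable (monotone_weightedHalves_increments hw h0) hc hsum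

lemma monotoneWiener_add_sum_sq_le {c d : ι → ℕ} (hc : ∀ i j, c i ≤ c j + 1)
    (hsum : ∑ i, c i = ∑ i, d i) :
    monotoneWiener c + ∑ t ∈ range (∑ i, c i), ((halfExcess d t : ℤ) - halfExcess c t) ^ 2
      ≤ monotoneWiener d := by
  set N := ∑ i, c i with hN
  -- `w t` is the slope of `x ↦ x * (N - x)` at `halfExcess d t`.
  let w : ℕ → ℤ := fun t ↦ N - 2 * halfExcess d t
  have hw : Monotone w := fun s t hst ↦ by
    have := antitone_halfExcess d hst
    grind
  have h0 : 0 ≤ w 0 := by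
    have := two_mul_halfExcess_le d 0
    grind
  have hle := sum_mul_halfExcess_le_of_equitable hw h0 hc hsum
  have hexpand : monotoneWiener d - monotoneWiener c
      - ∑ t ∈ range N, ((halfExcess d t : ℤ) - halfExcess c t) ^ 2
      = ∑ t ∈ range N, w t * halfExcess d t - ∑ t ∈ range N, w t * halfExcess c t := by
    simp only [monotoneWiener, ← hsum, ← hN, ← sum_sub_distrib, w]
    exact sum_congr rfl fun t _ ↦ by ring
  linarith

lemma monotoneWiener_le_of_equitable {c d : ι → ℕ} (hc : ∀ i j, c i ≤ c j + 1)
    (hsum : ∑ i, c i = ∑ i, d i) : monotoneWiener c ≤ monotoneWiener d := by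
  have hsq : 0 ≤ ∑ t ∈ range (∑ i, c i), ((halfExcess d t : ℤ) - halfExcess c t) ^ 2 := by
    positivity
  linarith [monotoneWiener_add_sum_sq_le hc hsum]

lemma halfExcess_eq_of_monotoneWiener_le {c d : ι → ℕ} (hc : ∀ i j, c i ≤ c j + 1)
    (hsum : ∑ i, c i = ∑ i, d i) (hle : monotoneWiener d ≤ monotoneWiener c) :
    halfExcess d = halfExcess c := by
  funext t
  rcases lt_or_ge t (∑ i, c i) with ht | ht
  · have hsq : ∑ t ∈ range (∑ i, c i), ((halfExcess d t : ℤ) - halfExcess c t) ^ 2 = 0 :=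
      le_antisymm (by linarith [monotoneWiener_add_sum_sq_le hc hsum]) (by positivity)
    have hterm := (sum_eq_zero_iff_of_nonneg fun _ _ ↦ sq_nonneg _).1 hsq t (mem_range.2 ht)
    exact Nat.cast_injective (sub_eq_zero.1 (pow_eq_zero_iff two_ne_zero |>.1 hterm))
  · rw [halfExcess_eq_zero_of_sum_le ht, halfExcess_eq_zero_of_sum_le (hsum ▸ ht)]

lemma equitable_of_halfExcess_eq {c d : ι → ℕ} (hc : ∀ i j, c i ≤ c j + 1)
    (hsum : ∑ i, c i = ∑ i, d i) (heq : halfExcess d = halfExcess c) (i j : ι) :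
    d i ≤ d j + 1 := by
  obtain ⟨q, hq⟩ := Set.equitableOn_iff_exists_eq_eq_add_one.1
    (fun i j _ _ ↦ hc i j : Set.univ.EquitableOn c)
  have hupper (i : ι) : d i ≤ q + 1 := by
    have hzero : halfExcess d q = 0 := by
      rw [heq]
      exact sum_eq_zero fun i _ ↦ by have := hq i trivial; omega
    have := sum_eq_zero_iff.1 hzero i (mem_univ i)
    omega
  rcases q with _ | q
  · exact (hupper i).trans (Nat.le_add_left ..)
  have hlower (i : ι) : q + 1 ≤ d i := by
    have hcount : ∑ i, d i = ∑ i, (q + 1 + (d i - q) / 2) := by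
      have hcc : ∑ i, c i = ∑ i, (q + 1 + (c i - q) / 2) :=
        sum_congr rfl fun i _ ↦ by have := hq i trivial; omega
      rw [← hsum, hcc]
      simp only [sum_add_distrib]
      exact congrArg _ (congrFun heq q).symm
    have hterm := (sum_eq_sum_iff_of_le fun i _ ↦ by have := hupper i; omega).1 hcount i
      (mem_univ i)
    omega
  exact (hupper i).trans (Nat.succ_le_succ (hlower j))

end HalfExcess

section WienerSet

lemma wienerSet_eq_sum_lt {V : Type*} [Fintype V] [LinearOrder V] (G : SimpleGraph V)
    (A : Finset V) : wienerSet G A = ∑ v ∈ A, ∑ u ∈ A with u < v, G.dist u v := by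
  have hswap : ∑ v ∈ A, ∑ u ∈ A with v < u, G.dist u v
      = ∑ v ∈ A, ∑ u ∈ A with u < v, G.dist u v := by
    rw [sum_comm' (t' := A) (s' := fun u ↦ {v ∈ A | v < u}) (by grind)]
    simp only [G.dist_comm]
  have hsplit : ∑ p ∈ A.offDiag, G.dist p.1 p.2
      = ∑ v ∈ A, ∑ u ∈ A with u < v, G.dist u v + ∑ v ∈ A, ∑ u ∈ A with v < u, G.dist u v := by
    rw [← sum_add_distrib, sum_finset_product_right A.offDiag A (fun v ↦ {u ∈ A | u ≠ v})
      (fun p ↦ by rw [mem_offDiag, mem_filter]; tauto)]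
    refine sum_congr rfl fun v _ ↦ ?_
    rw [← sum_union (disjoint_filter.2 fun _ _ h ↦ h.not_gt), ← filter_or]
    simp only [lt_or_lt_iff_ne]
  rw [wienerSet, hsplit, hswap, ← mul_two, Nat.mul_div_cancel _ two_pos]

variable {n : ℕ}

lemma pathGraph_dist_le_of_val_eq_add (u : Fin n) :
    ∀ (d : ℕ) (v : Fin n), (v : ℕ) = u + d → (pathGraph n).dist u v ≤ d := by
  have hconn : (pathGraph n).Connected :=
    { preconnected := pathGraph_preconnected n, nonempty := ⟨u⟩ }
  intro d
  induction d with
  | zero =>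
    intro v hv
    simp [Fin.ext (show (v : ℕ) = u by omega)]
  | succ d ih =>
    intro v hv
    let w : Fin n := ⟨u + d, by omega⟩
    have hwv : (pathGraph n).dist w v = 1 := by
      rw [dist_eq_one_iff_adj, pathGraph_adj]
      exact Or.inl (by simp [w]; omega)
    have htri := hconn.dist_triangle (u := u) (v := w) (w := v)
    have := ih w rfl
    omega

lemma val_le_val_add_walk_length {u v : Fin n} (p : (pathGraph n).Walk u v) :
    (v : ℕ) ≤ u + p.length := by
  induction p with
  | nil => simp
  | cons h p ih =>
    rw [pathGraph_adj] at h
    rw [Walk.length_cons]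
    omega

lemma pathGraph_dist_of_le {u v : Fin n} (h : u ≤ v) :
    ((pathGraph n).dist u v : ℤ) = v - u := by
  obtain ⟨p, hp⟩ := (pathGraph_preconnected n u v).exists_walk_length_eq_dist
  have hlower := val_le_val_add_walk_length p
  have hupper := pathGraph_dist_le_of_val_eq_add u (v - u) v (by omega)
  omega

lemma wienerSet_pathGraph (A : Finset (Fin n)) :
    (wienerSet (pathGraph n) A : ℤ)
      = ∑ v ∈ A, (v : ℤ) * (#{u ∈ A | u < v} - #{u ∈ A | v < u}) := by
  have hdist : (wienerSet (pathGraph n) A : ℤ)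
      = ∑ v ∈ A, ∑ u ∈ A with u < v, ((v : ℤ) - u) := by
    rw [wienerSet_eq_sum_lt]
    push_cast
    exact sum_congr rfl fun v _ ↦ sum_congr rfl fun u hu ↦
      pathGraph_dist_of_le (mem_filter.1 hu).2.le
  have hswap : ∑ v ∈ A, ∑ u ∈ A with u < v, (u : ℤ) = ∑ u ∈ A, ∑ v ∈ A with u < v, (u : ℤ) :=
    sum_comm' (by grind)
  simp only [hdist, sum_sub_distrib, hswap, mul_sub, sum_const, nsmul_eq_mul, mul_comm]

end WienerSet

section ColorClass

variable {V : Type*} [Fintype V] {k : ℕ}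

lemma sum_card_colorClass (f : V → Fin k) : ∑ i, #(colorClass f i) = Fintype.card V :=
  (card_eq_sum_card_fiberwise fun _ _ ↦ mem_univ _).symm

lemma colorType_comp_equiv (f : V → Fin k) (σ : Equiv.Perm V) :
    colorType (f ∘ σ) = colorType f := by
  refine Multiset.map_congr rfl fun i _ ↦ card_equiv σ fun v ↦ ?_
  simp [colorClass]

lemma equitable_iff_of_colorType_eq {f g : V → Fin k} (h : colorType f = colorType g) :
    (∀ i j, #(colorClass f i) ≤ #(colorClass f j) + 1)
      ↔ ∀ i j, #(colorClass g i) ≤ #(colorClass g j) + 1 := by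
  have hiff (e : V → Fin k) : (∀ i j, #(colorClass e i) ≤ #(colorClass e j) + 1)
      ↔ ∀ x ∈ colorType e, ∀ y ∈ colorType e, x ≤ y + 1 := by
    simp [colorType]
  rw [hiff, hiff, h]

lemma exists_isWeakMaximizer_of_surjective [DecidableEq V] (G : SimpleGraph V) {f : V → Fin k}
    (hf : Function.Surjective f) :
    ∃ g : V → Fin k, IsWeakMaximizer G g ∧ colorType g = colorType f := by
  obtain ⟨g, ⟨hg, htype⟩, hmax⟩ := Set.exists_max_image
    {g : V → Fin k | Function.Surjective g ∧ colorType g = colorType f} (wienerColoring G)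
    (Set.toFinite _) ⟨f, hf, rfl⟩
  exact ⟨g, ⟨hg, fun e he het ↦ hmax e ⟨he, het.trans htype⟩⟩, htype⟩

lemma IsWeakMaximizer.isLocalWeakMaximizer [DecidableEq V] {G : SimpleGraph V} {f : V → Fin k}
    (hf : IsWeakMaximizer G f) : IsLocalWeakMaximizer G f :=
  ⟨hf.1, fun _ _ _ ↦ hf.2 _ (hf.1.comp (Equiv.surjective _)) (colorType_comp_equiv f _)⟩

lemma exists_surjective_equitable {n : ℕ} (hk : 0 < k) (hkn : k ≤ n) :
    ∃ f : Fin n → Fin k, Function.Surjective f ∧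
      ∀ i j, #(colorClass f i) ≤ #(colorClass f j) + 1 := by
  let f : Fin n → Fin k := fun v ↦ ⟨v % k, Nat.mod_lt _ hk⟩
  have hcard (i : Fin k) : #(colorClass f i) = n / k + if i % k < n % k then 1 else 0 := by
    rw [← Nat.count_modEq_card n hk i, Nat.count_eq_card_filter_range, card_filter,
      ← Fin.sum_univ_eq_sum_range (fun v ↦ if v ≡ i [MOD k] then 1 else 0), ← card_filter]
    simp [colorClass, f, Fin.ext_iff, Nat.ModEq, Nat.mod_eq_of_lt i.isLt]
  refine ⟨f, fun i ↦ ⟨i.castLE hkn, Fin.ext (Nat.mod_eq_of_lt i.isLt)⟩, fun i j ↦ ?_⟩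
  rw [hcard, hcard]
  split_ifs <;> omega

end ColorClass

section ColorSkew

variable {n k : ℕ} {f : Fin n → Fin k}

/-- The coefficient of `v` in the Wiener index of the coloring `f` of a path: the number of
vertices of the color of `v` on its left minus the number of those on its right. -/
def colorSkew (f : Fin n → Fin k) (v : Fin n) : ℤ :=
  leftCount f v - rightCount f v

lemma leftCount_eq_card_filter_colorClass (f : Fin n → Fin k) (v : Fin n) :
    leftCount f v = #{w ∈ colorClass f (f v) | w < v} := by
  rw [leftCount, colorClass, filter_filter]
  simp only [and_comm]

lemma rightCount_eq_card_filter_colorClass (f : Fin n → Fin k) (v : Fin n) :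
    rightCount f v = #{w ∈ colorClass f (f v) | v < w} := by
  rw [rightCount, colorClass, filter_filter]
  simp only [and_comm]

lemma leftCount_add_rightCount_add_one (f : Fin n → Fin k) (v : Fin n) :
    leftCount f v + rightCount f v + 1 = #(colorClass f (f v)) := by
  have hv : v ∈ colorClass f (f v) := by simp [colorClass]
  rw [leftCount_eq_card_filter_colorClass, rightCount_eq_card_filter_colorClass,
    ← card_union_of_disjoint (disjoint_filter.2 fun _ _ h ↦ h.not_gt), ← filter_or,
    ← card_erase_add_one hv, ← filter_ne']
  simp only [lt_or_lt_iff_ne]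

lemma wienerColoring_pathGraph (f : Fin n → Fin k) :
    (wienerColoring (pathGraph n) f : ℤ) = ∑ v : Fin n, (v : ℤ) * colorSkew f v := by
  simp only [wienerColoring, Nat.cast_sum, wienerSet_pathGraph]
  rw [← sum_fiberwise univ f fun v : Fin n ↦ (v : ℤ) * colorSkew f v]
  refine sum_congr rfl fun i _ ↦ sum_congr rfl fun v hv ↦ ?_
  rw [colorSkew, leftCount_eq_card_filter_colorClass, rightCount_eq_card_filter_colorClass,
    (mem_filter.1 hv).2]

lemma swap_lt_swap_iff_of_covBy {α : Type*} [LinearOrder α] {a b x y : α} (hab : a ⋖ b)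
    (hxy : s(x, y) ≠ s(a, b)) : Equiv.swap a b x < Equiv.swap a b y ↔ x < y := by
  have hlt (c : α) (hc : c ≠ a) : c < b ↔ c < a :=
    ⟨fun h ↦ (not_lt.1 fun h' ↦ hab.2 h' h).lt_of_ne hc, fun h ↦ h.trans hab.1⟩
  have hgt (c : α) (hc : c ≠ b) : a < c ↔ b < c :=
    ⟨fun h ↦ (not_lt.1 fun h' ↦ hab.2 h h').lt_of_ne hc.symm, hab.1.trans⟩
  rw [Equiv.swap_apply_def, Equiv.swap_apply_def]
  grind

lemma colorSkew_swapColors {a b : Fin n} (hab : a ⋖ b) (hf : f a ≠ f b) (v : Fin n) :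
    colorSkew (swapColors f a b) v = colorSkew f (Equiv.swap a b v) := by
  have hpair {x y : Fin n} (h : f (Equiv.swap a b x) = f (Equiv.swap a b y)) :
      s(x, y) ≠ s(a, b) := by
    rw [Ne, Sym2.eq_iff]
    rintro (⟨rfl, rfl⟩ | ⟨rfl, rfl⟩) <;> simp_all
  have hleft : leftCount (swapColors f a b) v = leftCount f (Equiv.swap a b v) :=
    card_equiv (Equiv.swap a b) fun w ↦ by
      rw [mem_filter_univ, mem_filter_univ]
      exact and_congr_left fun h ↦ (swap_lt_swap_iff_of_covBy hab (hpair h)).symm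
  have hright : rightCount (swapColors f a b) v = rightCount f (Equiv.swap a b v) :=
    card_equiv (Equiv.swap a b) fun w ↦ by
      rw [mem_filter_univ, mem_filter_univ]
      exact and_congr_left fun h ↦ (swap_lt_swap_iff_of_covBy hab (hpair h.symm)).symm
  rw [colorSkew, colorSkew, hleft, hright]

lemma wienerColoring_pathGraph_swapColors {a b : Fin n} (hab : a ⋖ b) (hf : f a ≠ f b) :
    (wienerColoring (pathGraph n) (swapColors f a b) : ℤ)
      = wienerColoring (pathGraph n) f + (colorSkew f a - colorSkew f b) := by
  have hval : (b : ℤ) = a + 1 := mod_cast (Nat.covBy_iff_add_one_eq.1 (Fin.covBy_iff.1 hab)).symm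
  have hswap : (wienerColoring (pathGraph n) (swapColors f a b) : ℤ)
      = ∑ v, (Equiv.swap a b v : ℤ) * colorSkew f v := by
    rw [wienerColoring_pathGraph, ← Equiv.sum_comp (Equiv.swap a b)]
    simp only [colorSkew_swapColors hab hf, Equiv.swap_apply_self]
  rw [← sub_eq_iff_eq_add', hswap, wienerColoring_pathGraph, ← sum_sub_distrib,
    Fintype.sum_eq_add a b hab.ne fun v hv ↦ by
      rw [Equiv.swap_apply_of_ne_of_ne hv.1 hv.2, sub_self],
    Equiv.swap_apply_left, Equiv.swap_apply_right, hval]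
  ring

lemma colorSkew_le_colorSkew_of_apply_eq {a b : Fin n} (hab : a ≤ b) (hf : f a = f b) :
    colorSkew f a ≤ colorSkew f b := by
  have hleft : leftCount f a ≤ leftCount f b :=
    card_le_card <| monotone_filter_right _ fun w _ h ↦ ⟨h.1.trans_le hab, h.2.trans hf⟩
  have hright : rightCount f b ≤ rightCount f a :=
    card_le_card <| monotone_filter_right _ fun w _ h ↦ ⟨hab.trans_lt h.1, h.2.trans hf.symm⟩
  rw [colorSkew, colorSkew]
  omega

lemma IsLocalWeakMaximizer.monotone_colorSkew (hf : IsLocalWeakMaximizer (pathGraph n) f) :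
    Monotone (colorSkew f) := by
  refine (monotone_iff_forall_covBy _).2 fun a b hab ↦ ?_
  by_cases hcolor : f a = f b
  · exact colorSkew_le_colorSkew_of_apply_eq hab.le hcolor
  · have hmax := hf.2 a b (Or.inl hab)
    have hswap := wienerColoring_pathGraph_swapColors hab hcolor
    omega

end ColorSkew

section SkewCount

lemma card_filter_card_filter_lt_lt {α : Type*} [LinearOrder α] (A : Finset α) {m : ℕ}
    (hm : m ≤ #A) : #{v ∈ A | #{w ∈ A | w < v} < m} = m := by
  let rank (v : α) : ℕ := #{w ∈ A | w < v}
  have hmono : StrictMonoOn rank A := fun u hu v _ huv ↦ card_lt_card <|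
    (ssubset_iff_of_subset <| monotone_filter_right A fun _ _ h ↦ h.trans huv).2
      ⟨u, by simpa using ⟨hu, huv⟩, by simp⟩
  have himage : A.image rank = range #A := by
    refine eq_of_subset_of_card_le (image_subset_iff.2 fun v hv ↦ mem_range.2 ?_) ?_
    · exact card_lt_card (filter_ssubset.2 ⟨v, hv, lt_irrefl v⟩)
    · rw [card_range, card_image_of_injOn hmono.injOn]
  have himage_filter : {v ∈ A | rank v < m}.image rank = range m := by
    rw [← filter_image (p := (· < m)), himage]
    ext j
    simp only [mem_filter, mem_range]
    omega
  rw [← card_image_of_injOn (hmono.injOn.mono (filter_subset _ A)), himage_filter, card_range]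

lemma card_filter_card_filter_gt_lt {α : Type*} [LinearOrder α] (A : Finset α) {m : ℕ}
    (hm : m ≤ #A) : #{v ∈ A | #{w ∈ A | v < w} < m} = m :=
  card_filter_card_filter_lt_lt (α := αᵒᵈ) A hm

variable {n k : ℕ} (f : Fin n → Fin k) (t : ℕ)

lemma lt_colorSkew_iff (v : Fin n) :
    (t : ℤ) < colorSkew f v ↔ rightCount f v < (#(colorClass f (f v)) - t) / 2 := by
  have := leftCount_add_rightCount_add_one f v
  rw [colorSkew]
  omega

lemma colorSkew_lt_neg_iff (v : Fin n) :
    colorSkew f v < -t ↔ leftCount f v < (#(colorClass f (f v)) - t) / 2 := by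
  have := leftCount_add_rightCount_add_one f v
  rw [colorSkew]
  omega

lemma card_filter_lt_colorSkew :
    #{v | (t : ℤ) < colorSkew f v} = halfExcess (fun i ↦ #(colorClass f i)) t := by
  rw [card_eq_sum_card_fiberwise (f := f) (t := univ) fun _ _ ↦ mem_univ _]
  refine sum_congr rfl fun i _ ↦ ?_
  rw [← card_filter_card_filter_gt_lt (colorClass f i) (m := (#(colorClass f i) - t) / 2)
    (by omega), filter_comm]
  refine congrArg card (filter_congr fun v hv ↦ ?_)
  rw [lt_colorSkew_iff, rightCount_eq_card_filter_colorClass, (mem_filter.1 hv).2]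

lemma card_filter_colorSkew_lt_neg :
    #{v | colorSkew f v < -t} = halfExcess (fun i ↦ #(colorClass f i)) t := by
  rw [card_eq_sum_card_fiberwise (f := f) (t := univ) fun _ _ ↦ mem_univ _]
  refine sum_congr rfl fun i _ ↦ ?_
  rw [← card_filter_card_filter_lt_lt (colorClass f i) (m := (#(colorClass f i) - t) / 2)
    (by omega), filter_comm]
  refine congrArg card (filter_congr fun v hv ↦ ?_)
  rw [colorSkew_lt_neg_iff, leftCount_eq_card_filter_colorClass, (mem_filter.1 hv).2]

end SkewCount

section LayerCake

lemma sum_val_eq_sum_range_card_of_isLowerSet {M : Type*} [AddCommMonoid M] (g : ℕ → M) {n : ℕ}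
    {s : Finset (Fin n)} (hs : IsLowerSet (s : Set (Fin n))) :
    ∑ v ∈ s, g v = ∑ j ∈ range #s, g j := by
  have hmap : s.map Fin.valEmbedding = range #s := by
    refine eq_of_subset_of_card_le (fun j hj ↦ mem_range.2 ?_) (by simp)
    obtain ⟨v, hv, rfl⟩ := mem_map.1 hj
    have hle : #(Iic v) ≤ #s := card_le_card fun w hw ↦ hs (mem_Iic.1 hw) hv
    simpa [Nat.succ_le_iff] using hle
  rw [← hmap, sum_map]
  rfl

lemma sum_range_add_sub_sum_range_sub_sum_range (m l : ℕ) :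
    ∑ j ∈ range (m + l), (j : ℤ) - ∑ j ∈ range l, (j : ℤ) - ∑ j ∈ range m, (j : ℤ)
      = m * l := by
  simp only [sum_range_add, Nat.cast_add, sum_add_distrib, sum_const, card_range, nsmul_eq_mul]
  ring

lemma sum_val_sub_sum_val_of_isUpperSet_of_isLowerSet {n : ℕ} {s t : Finset (Fin n)}
    (hs : IsUpperSet (s : Set (Fin n))) (ht : IsLowerSet (t : Set (Fin n))) (hst : #s = #t) :
    ∑ v ∈ s, (v : ℤ) - ∑ v ∈ t, (v : ℤ) = #t * (n - #t : ℤ) := by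
  have hcard : #t + #sᶜ = n := by rw [← hst, card_add_card_compl, Fintype.card_fin]
  have huniv : ∑ v : Fin n, (v : ℤ) = ∑ j ∈ range n, (j : ℤ) := Fin.sum_univ_eq_sum_range _ n
  have hcompl := sum_compl_add_sum s fun v : Fin n ↦ (v : ℤ)
  rw [sum_val_eq_sum_range_card_of_isLowerSet _ (by simpa using hs.compl), huniv] at hcompl
  have hgauss := sum_range_add_sub_sum_range_sub_sum_range #t #sᶜ
  rw [hcard] at hgauss
  have hcast : (n : ℤ) = #t + #sᶜ := mod_cast hcard.symm
  rw [sum_val_eq_sum_range_card_of_isLowerSet _ ht, hcast, add_sub_cancel_left]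
  linarith

lemma eq_sum_range_ite_lt_sub_ite_lt_neg {x : ℤ} {N : ℕ} (hx : |x| ≤ N) :
    x = ∑ t ∈ range N, ((if (t : ℤ) < x then 1 else 0) - if x < -t then 1 else 0) := by
  have hcount (m : ℕ) (hm : m ≤ N) : ∑ t ∈ range N, (if (t : ℤ) < m then 1 else 0 : ℤ) = m := by
    have hfilter : (range N).filter (fun t : ℕ ↦ (t : ℤ) < m) = range m := by
      ext t
      simp only [mem_filter, mem_range]
      omega
    rw [← sum_filter, hfilter, sum_const, card_range, nsmul_one]
  have hneg (m t : ℕ) : ¬ (m : ℤ) < -t := by omega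
  obtain ⟨m, rfl | rfl⟩ := x.eq_nat_or_neg
  · simp only [hneg, if_false, sub_zero]
    exact (hcount m (by simpa using hx)).symm
  · simp only [hneg, neg_lt_neg_iff, if_false, zero_sub, sum_neg_distrib]
    rw [hcount m (by simpa using hx)]

variable {n k : ℕ}

lemma abs_colorSkew_le (f : Fin n → Fin k) (v : Fin n) : |colorSkew f v| ≤ n := by
  have hcount := leftCount_add_rightCount_add_one f v
  have hclass : #(colorClass f (f v)) ≤ n := card_finset_fin_le _
  rw [colorSkew, abs_le]
  omega

lemma wienerColoring_pathGraph_eq_sum_layers (f : Fin n → Fin k) :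
    (wienerColoring (pathGraph n) f : ℤ) = ∑ t ∈ range n,
      (∑ v with (t : ℤ) < colorSkew f v, (v : ℤ) - ∑ v with colorSkew f v < -t, (v : ℤ)) := by
  rw [wienerColoring_pathGraph]
  conv_lhs =>
    enter [2, v]
    rw [eq_sum_range_ite_lt_sub_ite_lt_neg (abs_colorSkew_le f v), mul_sum]
  rw [sum_comm]
  simp only [mul_sub, mul_ite, mul_one, mul_zero, sum_sub_distrib, sum_filter]

lemma IsLocalWeakMaximizer.wienerColoring_pathGraph_eq_monotoneWiener
    {f : Fin n → Fin k} (hf : IsLocalWeakMaximizer (pathGraph n) f) :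
    (wienerColoring (pathGraph n) f : ℤ) = monotoneWiener fun i ↦ #(colorClass f i) := by
  have hmono := hf.monotone_colorSkew
  rw [wienerColoring_pathGraph_eq_sum_layers, monotoneWiener, sum_card_colorClass,
    Fintype.card_fin]
  refine sum_congr rfl fun t _ ↦ ?_
  rw [sum_val_sub_sum_val_of_isUpperSet_of_isLowerSet, card_filter_colorSkew_lt_neg]
  · intro u v huv hu
    simpa using (by simpa using hu : (t : ℤ) < colorSkew f u).trans_le (hmono huv)
  · intro u v hvu hu
    simpa using (hmono hvu).trans_lt (by simpa using hu : colorSkew f u < -t)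
  · rw [card_filter_lt_colorSkew, card_filter_colorSkew_lt_neg]

end LayerCake

/-- For `2 ≤ k ≤ n` and `f` a `k`-color weak maximizer of `W` on `P_n`:
`W(f)` is minimal among `k`-color weak maximizers iff the sizes of any two color
classes of `f` differ by at most one. -/
theorem path_min_weakMaximizer (n k : ℕ) (hk : 2 ≤ k) (hkn : k ≤ n)
    (f : Fin n → Fin k) (hf : IsWeakMaximizer (SimpleGraph.pathGraph n) f) :
    (∀ g : Fin n → Fin k, IsWeakMaximizer (SimpleGraph.pathGraph n) g →
        wienerColoring (SimpleGraph.pathGraph n) f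
          ≤ wienerColoring (SimpleGraph.pathGraph n) g)
      ↔ ∀ i j : Fin k, (colorClass f i).card ≤ (colorClass f j).card + 1 := by
  have hformula {g : Fin n → Fin k} (hg : IsWeakMaximizer (pathGraph n) g) :
      (wienerColoring (pathGraph n) g : ℤ) = monotoneWiener fun i ↦ #(colorClass g i) :=
    hg.isLocalWeakMaximizer.wienerColoring_pathGraph_eq_monotoneWiener
  have hsum (g e : Fin n → Fin k) : ∑ i, #(colorClass g i) = ∑ i, #(colorClass e i) := by
    rw [sum_card_colorClass, sum_card_colorClass]
  constructor
  · intro hmin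
    obtain ⟨e, he, heq⟩ := exists_surjective_equitable (two_pos.trans_le hk) hkn
    obtain ⟨g, hg, htype⟩ := exists_isWeakMaximizer_of_surjective (pathGraph n) he
    have hg_equitable := (equitable_iff_of_colorType_eq htype).2 heq
    have hle : (wienerColoring (pathGraph n) f : ℤ) ≤ wienerColoring (pathGraph n) g :=
      mod_cast hmin g hg
    rw [hformula hf, hformula hg] at hle
    exact equitable_of_halfExcess_eq hg_equitable (hsum g f)
      (halfExcess_eq_of_monotoneWiener_le hg_equitable (hsum g f) hle)
  · intro hequitable g hg
    have hle := monotoneWiener_le_of_equitable hequitable (hsum f g)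
    rw [← hformula hf, ← hformula hg] at hle
    exact mod_cast hle
end

section
/- Suppose f, g : V(C_n) → {1,...,k} are k-color weak maximizers of the Wiener index W on C_n and type(g) ≺ type(f). Then W(g) ≤ W(f). -/
open SimpleGraph Finset

/-!
On `C_n`, two vertices at distance `d` lie in exactly `⌊n/2⌋ - d` common half-arcs, a half-arc
being a set of `⌊n/2⌋` consecutive vertices. Let `A` be a set of vertices, `τ = ⌈|A|/2⌉`, and let
`c_y` be the number of points of `A` in the half-arc starting at `y`. Double counting shows that
`2 W(A) + ∑_y (c_y - τ)(c_y - τ + 1)` depends only on `|A|`. Every summand is nonnegative, and is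
zero exactly when `c_y ∈ {τ - 1, τ}`; so `W(A)` has an upper bound in terms of `|A|`, attained
as soon as no half-arc contains more than half, rounded up, of `A` or of its complement.

A suitable rearrangement of any coloring attains the bound in all color classes at once.
Enumerate the vertices so that consecutive ones are antipodal: `0, ⌈n/2⌉, 1, ⌈n/2⌉ + 1, …`. Two
antipodal vertices never share a half-arc, so an interval of this enumeration that splits into
antipodal pairs and at most one single vertex is met evenly. Place the color classes as successive
intervals, those of even size first: then each of them, and its complement (a cyclic interval),
splits in this way.

Hence the maximal Wiener index of a coloring of a given type is the sum of the bounds for its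
classes. The bound is a convex function of the size of the class, and Karamata's inequality
concludes.
-/

section Majorization

theorem sum_take_le_sum_map_tsub_add (L : List ℕ) (l s : ℕ) :
    (L.take s).sum ≤ (L.map (· - l)).sum + s * l := by
  induction L generalizing s with
  | nil => simp
  | cons a L ih =>
    cases s with
    | zero => simp
    | succ s =>
      have htail := ih s
      simp only [List.take_succ_cons, List.sum_cons, List.map_cons, add_mul]
      omega

theorem exists_sum_map_tsub_add_eq_sum_take {L : List ℕ} (hL : L.SortedGE) (l : ℕ) :
    ∃ s, (L.map (· - l)).sum + s * l = (L.take s).sum := by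
  replace hL := hL.pairwise
  induction L with
  | nil => exact ⟨0, by simp⟩
  | cons a L ih =>
    obtain ⟨ha, hL⟩ := List.pairwise_cons.mp hL
    rcases le_or_gt a l with hal | hal
    · have hzero : ∀ b ∈ a :: L, b - l = 0 := by grind
      have hsum : ((a :: L).map (· - l)).sum = 0 :=
        List.sum_eq_zero (List.forall_mem_map.mpr hzero)
      exact ⟨0, by simpa using hsum⟩
    · obtain ⟨s, hs⟩ := ih hL
      refine ⟨s + 1, ?_⟩
      simp only [List.take_succ_cons, List.sum_cons, List.map_cons, add_mul]
      omega

theorem MajorizedBy.sum_map_tsub_le {x y : Multiset ℕ} (h : MajorizedBy x y) (l : ℕ) :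
    (x.map (· - l)).sum ≤ (y.map (· - l)).sum := by
  have sum_map_sort (z : Multiset ℕ) :
      ((z.sort (· ≤ ·)).reverse.map (· - l)).sum = (z.map (· - l)).sum := by
    conv_rhs => rw [← Multiset.sort_eq z (· ≤ ·)]
    rw [List.map_reverse, List.sum_reverse, Multiset.map_coe, Multiset.sum_coe]
  obtain ⟨s, hs⟩ := exists_sum_map_tsub_add_eq_sum_take
    (Multiset.pairwise_sort x (· ≤ ·)).sortedLE.reverse l
  have hy := sum_take_le_sum_map_tsub_add (y.sort (· ≤ ·)).reverse l s
  have hxy := h.2.2 s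
  rw [sum_map_sort] at hs hy
  unfold sumLargest at hxy
  omega

variable {M : Type*} [AddCommGroup M]

theorem eq_add_sum_tsub_nsmul_secondDiff (F : ℕ → M) {m k : ℕ} (hm : m ≤ k + 1) :
    F m = F 0 + m • (F 1 - F 0) +
      ∑ l ∈ range k, (m - (l + 1)) • ((F (l + 2) - F (l + 1)) - (F (l + 1) - F l)) := by
  induction m with
  | zero => simp
  | succ m ih =>
    have hincr : F (m + 1) - F m = (F 1 - F 0) +
        ∑ l ∈ range m, ((F (l + 2) - F (l + 1)) - (F (l + 1) - F l)) := by
      rw [sum_range_sub fun l => F (l + 1) - F l]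
      abel
    have hsplit (l : ℕ) (D : M) :
        (m + 1 - (l + 1)) • D = (m - (l + 1)) • D + if l < m then D else 0 := by
      split_ifs with hl
      · rw [← succ_nsmul]
        congr 1
        omega
      · rw [add_zero]
        congr 1
        omega
    have hrange : {l ∈ range k | l < m} = range m := by grind
    simp_rw [hsplit]
    rw [sum_add_distrib, ← sum_filter, hrange, ← sub_add_cancel (F (m + 1)) (F m), hincr,
      ih (by omega), succ_nsmul]
    abel

/-- Karamata's inequality, for a function convex on `{0, …, n}`. -/
theorem MajorizedBy.sum_map_le_sum_map [PartialOrder M] [IsOrderedAddMonoid M] {x y : Multiset ℕ}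
    (h : MajorizedBy x y) {F : ℕ → M} {n : ℕ}
    (hF : ∀ l, l + 2 ≤ n → F (l + 1) - F l ≤ F (l + 2) - F (l + 1))
    (hx : ∀ m ∈ x, m ≤ n) (hy : ∀ m ∈ y, m ≤ n) : (x.map F).sum ≤ (y.map F).sum := by
  have sum_map_eq (z : Multiset ℕ) (hz : ∀ m ∈ z, m ≤ n) : (z.map F).sum =
      z.card • F 0 + z.sum • (F 1 - F 0) + ∑ l ∈ range (n - 1), (z.map (· - (l + 1))).sum •
        ((F (l + 2) - F (l + 1)) - (F (l + 1) - F l)) := by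
    have hexpand (m) (hm : m ∈ z) := eq_add_sum_tsub_nsmul_secondDiff F
      (show m ≤ (n - 1) + 1 by have := hz m hm; omega)
    rw [Multiset.map_congr rfl hexpand]
    simp [Multiset.sum_map_add, Multiset.sum_map_sum, Multiset.sum_smul]
  rw [sum_map_eq x hx, sum_map_eq y hy, h.1, h.2.1]
  gcongr with l hl
  · have hl := mem_range.mp hl
    exact sub_nonneg.mpr (hF l (by omega))
  · exact h.sum_map_tsub_le (l + 1)

end Majorization

section MaxWiener

/-- The largest Wiener index of a set of `m` vertices of `C_n`: the value which double counting over
half-arcs gives when each half-arc contains `⌈m / 2⌉ - 1` or `⌈m / 2⌉` points of the set. -/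
def maxWiener (n m : ℕ) : ℕ :=
  (n - n / 2) * ((m + 1) / 2).choose 2 + n / 2 * (m / 2 + 1).choose 2

theorem two_mul_maxWiener (n m : ℕ) :
    2 * (maxWiener n m : ℤ) =
      (n / 2 : ℕ) * ((m - ((m + 1) / 2 : ℕ)) * (m - ((m + 1) / 2 : ℕ) + 1)) +
        (n - (n / 2 : ℕ)) * (((m + 1) / 2 : ℕ) * (((m + 1) / 2 : ℕ) - 1)) := by
  have two_mul_choose_two (a : ℕ) : 2 * (a.choose 2 : ℤ) = a * (a - 1) := by
    induction a with
    | zero => simp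
    | succ a ih =>
      rw [Nat.choose_succ_succ', Nat.choose_one_right]
      push_cast
      linear_combination ih
  have hfloor : ((m / 2 : ℕ) : ℤ) = m - ((m + 1) / 2 : ℕ) := by omega
  rw [maxWiener, ← hfloor]
  push_cast [Nat.cast_sub (Nat.div_le_self n 2)]
  have hchoose_ceil := two_mul_choose_two ((m + 1) / 2)
  have hchoose_floor := two_mul_choose_two (m / 2 + 1)
  push_cast at hchoose_ceil hchoose_floor
  linear_combination (n - (n / 2 : ℤ)) * hchoose_ceil + (n / 2 : ℤ) * hchoose_floor

theorem maxWiener_succ_sub (n m : ℕ) : (maxWiener n (m + 1) : ℤ) - maxWiener n m =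
    if Even m then ((n - n / 2) * (m / 2) : ℕ) else (n / 2 * (m / 2 + 1) : ℕ) := by
  obtain ⟨t, rfl | rfl⟩ := Nat.even_or_odd' m
  · have hdiv : 2 * t / 2 = t := by omega
    have hdiv_one : (2 * t + 1) / 2 = t := by omega
    have hdiv_two : (2 * t + 1 + 1) / 2 = t + 1 := by omega
    simp only [maxWiener, hdiv, hdiv_one, hdiv_two, even_two_mul, if_true,
      Nat.choose_succ_succ' t 1, Nat.choose_one_right]
    push_cast
    ring
  · have hdiv_one : (2 * t + 1) / 2 = t := by omega
    have hdiv_two : (2 * t + 1 + 1) / 2 = t + 1 := by omega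
    have hdiv_three : (2 * t + 1 + 1 + 1) / 2 = t + 1 := by omega
    simp only [maxWiener, hdiv_one, hdiv_two, hdiv_three, Nat.not_even_bit1, if_false,
      Nat.choose_succ_succ' (t + 1) 1, Nat.choose_one_right]
    push_cast
    ring

theorem maxWiener_convex {n m : ℕ} (hm : m + 2 ≤ n) :
    (maxWiener n (m + 1) : ℤ) - maxWiener n m ≤ maxWiener n (m + 2) - maxWiener n (m + 1) := by
  rw [maxWiener_succ_sub, maxWiener_succ_sub n (m + 1), Nat.cast_ite, Nat.cast_ite]
  norm_cast
  obtain ⟨t, rfl | rfl⟩ := Nat.even_or_odd' m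
  · have hdiv : 2 * t / 2 = t := by omega
    have hdiv_one : (2 * t + 1) / 2 = t := by omega
    simp only [hdiv, hdiv_one, even_two_mul, Nat.not_even_bit1, if_true, if_false]
    calc (n - n / 2) * t ≤ (n / 2 + 1) * t := Nat.mul_le_mul_right _ (by omega)
      _ = n / 2 * t + t := by ring
      _ ≤ n / 2 * t + n / 2 := Nat.add_le_add_left (by omega) _
      _ = n / 2 * (t + 1) := by ring
  · have hdiv_one : (2 * t + 1) / 2 = t := by omega
    have hdiv_two : (2 * t + 1 + 1) / 2 = t + 1 := by omega
    have heven : Even (2 * t + 1 + 1) := ⟨t + 1, by ring⟩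
    simp only [hdiv_one, hdiv_two, heven, Nat.not_even_bit1, if_true, if_false]
    exact Nat.mul_le_mul_right _ (by omega)

end MaxWiener

section EncodesDist

variable {V ι : Type*} [DecidableEq V] [Fintype ι] {G : SimpleGraph V} {S : ι → Finset V} {h : ℕ}

/-- The family `S` encodes the distances of `G` by intersection: two vertices at distance `d` have
exactly `h - d` members of `S` in common. This turns Wiener indices into a count of the vertices
lying in the members of `S`. The equation is written additively to avoid truncated subtraction. -/
def EncodesDist (G : SimpleGraph V) (S : ι → Finset V) (h : ℕ) : Prop :=
  ∀ u v, #{y | u ∈ S y ∧ v ∈ S y} + G.dist u v = h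

theorem EncodesDist.card_filter_mem (hS : EncodesDist G S h) (u : V) : #{y | u ∈ S y} = h := by
  simpa using hS u u

theorem EncodesDist.notMem_of_dist_eq (hS : EncodesDist G S h) {u v : V} (huv : G.dist u v = h)
    {y : ι} (hu : u ∈ S y) : v ∉ S y := fun hv => by
  have hempty : #{y | u ∈ S y ∧ v ∈ S y} = 0 := by have := hS u v; omega
  exact filter_eq_empty_iff.mp (card_eq_zero.mp hempty) (mem_univ y) ⟨hu, hv⟩

theorem EncodesDist.sum_card_inter (hS : EncodesDist G S h) (A : Finset V) :
    ∑ y, #(A ∩ S y) = #A * h := by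
  have hswap := sum_card_bipartiteAbove_eq_sum_card_bipartiteBelow (s := A) (t := univ)
    fun u y => u ∈ S y
  simpa [bipartiteAbove, bipartiteBelow, hS.card_filter_mem, filter_mem_eq_inter] using hswap.symm

theorem EncodesDist.sum_dist_add_sum_card_offDiag (hS : EncodesDist G S h) (A : Finset V) :
    ∑ p ∈ A.offDiag, G.dist p.1 p.2 + ∑ y, #(A ∩ S y).offDiag = #A.offDiag * h := by
  have hswap := sum_card_bipartiteAbove_eq_sum_card_bipartiteBelow (s := A.offDiag) (t := univ)
    fun p y => p.1 ∈ S y ∧ p.2 ∈ S y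
  have hoffDiag (y : ι) : {p ∈ A.offDiag | p.1 ∈ S y ∧ p.2 ∈ S y} = (A ∩ S y).offDiag := by
    grind
  simp only [bipartiteAbove, bipartiteBelow, hoffDiag] at hswap
  rw [← hswap, ← sum_add_distrib, sum_congr rfl fun p _ => (add_comm _ _).trans (hS p.1 p.2),
    sum_const, smul_eq_mul]

theorem EncodesDist.sum_dist_add_sum_defect (hS : EncodesDist G S h) (A : Finset V) (τ : ℤ) :
    ((∑ p ∈ A.offDiag, G.dist p.1 p.2 : ℕ) : ℤ) +
        ∑ y, ((#(A ∩ S y) : ℤ) - τ) * (#(A ∩ S y) - τ + 1) =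
      h * ((#A - τ) * (#A - τ + 1)) + (Fintype.card ι - h) * (τ * (τ - 1)) := by
  have hcard (B : Finset V) : (#B.offDiag : ℤ) = #B * (#B - 1) := by
    rw [offDiag_card, Nat.cast_sub (Nat.le_mul_self _)]
    push_cast
    ring
  have hpairs := congrArg (Nat.cast (R := ℤ)) (hS.sum_dist_add_sum_card_offDiag A)
  have hpoints := congrArg (Nat.cast (R := ℤ)) (hS.sum_card_inter A)
  have hdefect : ∑ y, ((#(A ∩ S y) : ℤ) - τ) * (#(A ∩ S y) - τ + 1) =
      ∑ y, (#(A ∩ S y) : ℤ) * (#(A ∩ S y) - 1) - 2 * (τ - 1) * ∑ y, (#(A ∩ S y) : ℤ) +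
        Fintype.card ι * (τ * (τ - 1)) := by
    rw [mul_sum, ← sum_sub_distrib, ← nsmul_eq_mul, ← card_univ, ← sum_const, ← sum_add_distrib]
    exact sum_congr rfl fun y _ => by ring
  push_cast [hcard] at hpairs hpoints ⊢
  linear_combination hpairs + hdefect - 2 * (τ - 1) * hpoints

end EncodesDist

section Cycle

theorem edist_add_natCast_le (n : ℕ) (u : ZMod n) (j : ℕ) :
    (cycleGraphZMod n).edist u (u + j) ≤ j := by
  induction j with
  | zero => simp
  | succ j ih =>
    have hstep : (cycleGraphZMod n).edist (u + j) (u + (j + 1 : ℕ)) ≤ 1 := by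
      rw [edist_le_one_iff_adj_or_eq, or_iff_not_imp_right]
      exact fun hne => ⟨hne, Or.inl (by push_cast; ring)⟩
    rw [Nat.cast_succ (R := ℕ∞)]
    exact SimpleGraph.edist_triangle.trans (add_le_add ih hstep)

variable {n : ℕ} [NeZero n]

theorem natAbs_valMinAbs_natCast_le (j : ℕ) : (j : ZMod n).valMinAbs.natAbs ≤ j := by
  rcases le_or_gt j (n / 2) with hj | hj
  · simp [ZMod.valMinAbs_natCast_of_le_half hj]
  · exact (ZMod.natAbs_valMinAbs_le _).trans hj.le

theorem natAbs_valMinAbs_sub_le_length {u v : ZMod n} (w : (cycleGraphZMod n).Walk u v) :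
    (v - u).valMinAbs.natAbs ≤ w.length := by
  induction w with
  | nil => simp
  | @cons u x v hadj w ih =>
    have hone : (1 : ZMod n).valMinAbs.natAbs ≤ 1 := by
      simpa using natAbs_valMinAbs_natCast_le (n := n) 1
    have hstep : (x - u).valMinAbs.natAbs ≤ 1 := by
      rcases hadj.2 with h | h
      · simpa [h] using hone
      · rw [← ZMod.natAbs_valMinAbs_neg]
        simpa [h] using hone
    calc (v - u).valMinAbs.natAbs = ((v - x) + (x - u)).valMinAbs.natAbs := by
          rw [sub_add_sub_cancel]
      _ ≤ ((v - x).valMinAbs + (x - u).valMinAbs).natAbs := ZMod.natAbs_valMinAbs_add_le _ _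
      _ ≤ (v - x).valMinAbs.natAbs + (x - u).valMinAbs.natAbs := Int.natAbs_add_le _ _
      _ ≤ w.length + 1 := add_le_add ih hstep

theorem eq_add_natAbs_valMinAbs_sub_or (u v : ZMod n) :
    v = u + (v - u).valMinAbs.natAbs ∨ u = v + (v - u).valMinAbs.natAbs := by
  rw [ZMod.natCast_natAbs_valMinAbs]
  split_ifs <;> simp

theorem edist_cycleGraphZMod (u v : ZMod n) :
    (cycleGraphZMod n).edist u v = (v - u).valMinAbs.natAbs := by
  refine le_antisymm ?_ (le_iInf fun w => Nat.cast_le.mpr (natAbs_valMinAbs_sub_le_length w))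
  rcases eq_add_natAbs_valMinAbs_sub_or u v with h | h
  · simpa only [← h] using edist_add_natCast_le n u (v - u).valMinAbs.natAbs
  · simpa only [← h, edist_comm] using edist_add_natCast_le n v (v - u).valMinAbs.natAbs

theorem dist_cycleGraphZMod (u v : ZMod n) :
    (cycleGraphZMod n).dist u v = (v - u).valMinAbs.natAbs := by
  simp [SimpleGraph.dist, edist_cycleGraphZMod]

theorem dist_of_eq_add_natCast {u v : ZMod n} {j : ℕ} (hj : j ≤ n / 2) (h : v = u + j) :
    (cycleGraphZMod n).dist u v = j := by
  rw [dist_cycleGraphZMod, h, add_sub_cancel_left, ZMod.valMinAbs_natCast_of_le_half hj,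
    Int.natAbs_natCast]

/-- The arc of `⌊n / 2⌋` consecutive vertices of the cycle that starts at `y`. -/
def halfArc (n : ℕ) [NeZero n] (y : ZMod n) : Finset (ZMod n) :=
  {v | (v - y).val < n / 2}

theorem card_filter_val_lt {a : ℕ} (ha : a ≤ n) : #{v : ZMod n | v.val < a} = a := by
  have himage : ({v : ZMod n | v.val < a} : Finset (ZMod n)).image ZMod.val = range a := by
    ext i
    simp only [mem_image, mem_filter_univ, Finset.mem_range]
    refine ⟨fun ⟨_, hv, hvi⟩ => hvi ▸ hv, fun hi => ⟨i, ?_⟩⟩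
    simp [ZMod.val_cast_of_lt (hi.trans_le ha), hi]
  rw [← card_image_of_injective _ (ZMod.val_injective n), himage, card_range]

theorem card_halfArc (y : ZMod n) : #(halfArc n y) = n / 2 := by
  rw [← card_filter_val_lt (n := n) (Nat.div_le_self n 2)]
  exact card_equiv (Equiv.subRight y) (by simp [halfArc])

theorem card_common_halfArc_add {j : ℕ} (hj : j ≤ n / 2) (u : ZMod n) :
    #{y | u ∈ halfArc n y ∧ u + j ∈ halfArc n y} + j = n / 2 := by
  have hn := NeZero.pos n
  have hshift (i : ZMod n) : i.val < n / 2 ∧ (i + j).val < n / 2 ↔ i.val < n / 2 - j := by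
    have hjval : (j : ZMod n).val = j := ZMod.val_cast_of_lt (by omega)
    constructor
    · rintro ⟨hi, hij⟩
      rw [ZMod.val_add_of_lt (by omega)] at hij
      omega
    · intro hi
      rw [ZMod.val_add_of_lt (by omega)]
      omega
  have hcard : #{y | u ∈ halfArc n y ∧ u + j ∈ halfArc n y} = #{i : ZMod n | i.val < n / 2 - j} :=
    card_equiv (Equiv.subLeft u) fun y => by
      simp [halfArc, ← hshift, add_sub_right_comm]
  rw [hcard, card_filter_val_lt (by omega)]
  omega

theorem encodesDist_halfArc : EncodesDist (cycleGraphZMod n) (halfArc n) (n / 2) := fun u v => by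
  have hle := ZMod.natAbs_valMinAbs_le (v - u)
  rw [dist_cycleGraphZMod]
  rcases eq_add_natAbs_valMinAbs_sub_or u v with h | h
  · simpa only [← h] using card_common_halfArc_add hle u
  · simpa only [← h, and_comm] using card_common_halfArc_add hle v

theorem sum_dist_add_sum_defect_halfArc (A : Finset (ZMod n)) :
    ((∑ p ∈ A.offDiag, (cycleGraphZMod n).dist p.1 p.2 : ℕ) : ℤ) +
        ∑ y, ((#(A ∩ halfArc n y) : ℤ) - ((#A + 1) / 2 : ℕ)) *
          (#(A ∩ halfArc n y) - ((#A + 1) / 2 : ℕ) + 1) = 2 * maxWiener n #A := by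
  rw [encodesDist_halfArc.sum_dist_add_sum_defect, two_mul_maxWiener, ZMod.card]

theorem wienerSet_le_maxWiener (A : Finset (ZMod n)) :
    wienerSet (cycleGraphZMod n) A ≤ maxWiener n #A := by
  have hdefect : 0 ≤ ∑ y, ((#(A ∩ halfArc n y) : ℤ) - ((#A + 1) / 2 : ℕ)) *
      (#(A ∩ halfArc n y) - ((#A + 1) / 2 : ℕ) + 1) := by
    refine sum_nonneg fun y _ => ?_
    rcases lt_or_ge (#(A ∩ halfArc n y)) ((#A + 1) / 2) with hy | hy
    · exact mul_nonneg_of_nonpos_of_nonpos (by omega) (by omega)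
    · exact mul_nonneg (by omega) (by omega)
  have hsum := sum_dist_add_sum_defect_halfArc A
  unfold wienerSet
  omega

/-- No half-arc contains more than half, rounded up, of the points of `A`. When this holds for `A`
and for its complement, `A` has the largest Wiener index for its size. -/
def HalfArcBalanced (A : Finset (ZMod n)) : Prop :=
  ∀ y, #(A ∩ halfArc n y) ≤ (#A + 1) / 2

theorem HalfArcBalanced.wienerSet_eq_maxWiener {A : Finset (ZMod n)} (hA : HalfArcBalanced A)
    (hAc : HalfArcBalanced Aᶜ) : wienerSet (cycleGraphZMod n) A = maxWiener n #A := by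
  have hzero : ∑ y, ((#(A ∩ halfArc n y) : ℤ) - ((#A + 1) / 2 : ℕ)) *
      (#(A ∩ halfArc n y) - ((#A + 1) / 2 : ℕ) + 1) = 0 := by
    refine sum_eq_zero fun y _ => mul_eq_zero.mpr ?_
    have hyA := hA y
    have hyAc := hAc y
    have hsplit : #(A ∩ halfArc n y) + #(Aᶜ ∩ halfArc n y) = n / 2 := by
      rw [← card_halfArc y, inter_comm, inter_comm Aᶜ, ← sdiff_eq_inter_compl,
        card_inter_add_card_sdiff]
    have hcard := card_add_card_compl A
    rw [ZMod.card] at hcard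
    omega
  have hsum := sum_dist_add_sum_defect_halfArc A
  unfold wienerSet
  omega

end Cycle

section Intervals

theorem card_filter_Ico_le_half {P : ℕ → Prop} [DecidablePred P] {d s m : ℕ}
    (hP : ∀ j, Even (j + d) → P j → ¬P (j + 1)) (h : Even (s + d) ∨ Odd m) :
    #{j ∈ Ico s (s + m) | P j} ≤ (m + 1) / 2 := by
  -- `j ↦ (j + d) / 2` numbers the pairs `{j, j + 1}` to which `hP` applies.
  have hinj : Set.InjOn (fun j => (j + d) / 2) ({j ∈ Ico s (s + m) | P j} : Finset ℕ) := by
    intro i hi j hj hij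
    obtain ⟨-, hi⟩ := mem_filter.mp hi
    obtain ⟨-, hj⟩ := mem_filter.mp hj
    have hij : (i + d) / 2 = (j + d) / 2 := hij
    have not_succ {j : ℕ} (hj : P j) (hpair : (j + d) / 2 = (j + 1 + d) / 2) : ¬P (j + 1) :=
      hP j (by grind) hj
    rcases (by omega : i = j ∨ j = i + 1 ∨ i = j + 1) with hij' | rfl | rfl
    · exact hij'
    · exact absurd hj (not_succ hi hij)
    · exact absurd hi (not_succ hj hij.symm)
  have himage : ({j ∈ Ico s (s + m) | P j}).image (fun j => (j + d) / 2) ⊆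
      Ico ((s + d) / 2) ((s + d + m + 1) / 2) := by
    simp only [image_subset_iff, mem_filter, mem_Ico]
    omega
  calc #{j ∈ Ico s (s + m) | P j}
      = #(({j ∈ Ico s (s + m) | P j}).image fun j => (j + d) / 2) := (card_image_of_injOn hinj).symm
    _ ≤ (s + d + m + 1) / 2 - (s + d) / 2 := (card_le_card himage).trans_eq (Nat.card_Ico _ _)
    _ ≤ (m + 1) / 2 := by grind

theorem image_val_filter_eq_Ico_of_monotone {β : Type*} [LinearOrder β] {n : ℕ} {g : Fin n → β}
    (hg : Monotone g) (a : β) :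
    ({j | g j = a} : Finset (Fin n)).image Fin.val =
      Ico #{j | g j < a} (#{j | g j < a} + #{j | g j = a}) := by
  have hle : #{j | g j ≤ a} = #{j | g j < a} + #{j | g j = a} := by
    rw [← card_union_of_disjoint (by grind [disjoint_filter]), ← filter_or]
    simp only [le_iff_lt_or_eq]
  rw [← hle]
  ext j
  simp only [mem_image, mem_filter_univ, mem_Ico]
  constructor
  · rintro ⟨j, hj, rfl⟩
    have hlt := Tuple.lt_card_lt_iff_apply_lt_of_monotone (j := j) (a := a) hg
    have hle := Tuple.lt_card_le_iff_apply_le_of_monotone (j := j) (a := a) hg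
    grind
  · rintro ⟨hlower, hupper⟩
    have hj : j < n := hupper.trans_le ((card_filter_le _ _).trans_eq (card_fin n))
    have hlt := Tuple.lt_card_lt_iff_apply_lt_of_monotone (j := ⟨j, hj⟩) (a := a) hg
    have hle := Tuple.lt_card_le_iff_apply_le_of_monotone (j := ⟨j, hj⟩) (a := a) hg
    exact ⟨⟨j, hj⟩, by grind, rfl⟩

theorem even_card_filter_lt {V β : Type*} [Fintype V] [LinearOrder β] {g : V → β} {a : β}
    (h : ∀ v, g v < a → Even #{w | g w = g v}) : Even #{v | g v < a} := by
  rw [card_eq_sum_card_image g]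
  refine even_sum _ fun b hb => ?_
  obtain ⟨v, hv, rfl⟩ := mem_image.mp hb
  have hv : g v < a := (mem_filter_univ v).mp hv
  have hfiber (w : V) : g w < a ∧ g w = g v ↔ g w = g v :=
    and_iff_right_of_imp fun hw => hw ▸ hv
  simpa only [filter_filter, hfiber] using h v hv

end Intervals

section AntipodalOrder

/-- A periodic enumeration `0, ⌈n/2⌉, 1, ⌈n/2⌉ + 1, …` of the vertices of the cycle, in which
consecutive vertices are antipodal except, when `n` is even, for those at odd positions `j`
and `j + 1`. -/
def antipodalOrder (n j : ℕ) : ZMod n :=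
  (j % n % 2 * (n - n / 2) + j % n / 2 : ℕ)

theorem antipodalOrder_of_mod_eq_two_mul {n j i : ℕ} (hj : j % n = 2 * i) :
    antipodalOrder n j = i := by
  simp [antipodalOrder, hj]

theorem antipodalOrder_of_mod_eq_two_mul_add_one {n j i : ℕ} (hj : j % n = 2 * i + 1) :
    antipodalOrder n j = (n - n / 2 + i : ℕ) := by
  have hhalf : (2 * i + 1) / 2 = i := by omega
  simp [antipodalOrder, hj, hhalf]

variable {n : ℕ} [NeZero n]

theorem antipodalOrder_eq_succ_add {j : ℕ} (h : Odd n ∨ Even j) :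
    antipodalOrder n j = antipodalOrder n (j + 1) + (n / 2 : ℕ) := by
  have hsucc : (j + 1) % n = if j % n + 1 = n then 0 else j % n + 1 := by
    rw [← Nat.mod_add_mod]
    split_ifs with hlast
    · rw [hlast, Nat.mod_self]
    · exact Nat.mod_eq_of_lt (by have := Nat.mod_lt j (NeZero.pos n); omega)
  have hparity : Even n → Even (j % n) := fun hn =>
    (h.resolve_left (Nat.not_odd_iff_even.mpr hn)).mod_even hn
  obtain ⟨i, hi | hi⟩ := Nat.even_or_odd' (j % n)
  · rw [antipodalOrder_of_mod_eq_two_mul hi]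
    split_ifs at hsucc with hlast
    · have hhalf : i = n / 2 := by omega
      simp [antipodalOrder, hsucc, hhalf]
    · rw [antipodalOrder_of_mod_eq_two_mul_add_one (hsucc.trans (congrArg (· + 1) hi)),
        ← Nat.cast_add, show n - n / 2 + i + n / 2 = n + i by omega, Nat.cast_add,
        ZMod.natCast_self, zero_add]
  · have hn : Odd n := by grind
    rw [antipodalOrder_of_mod_eq_two_mul_add_one hi]
    split_ifs at hsucc with hlast
    · grind
    · rw [antipodalOrder_of_mod_eq_two_mul (i := i + 1) (by omega), ← Nat.cast_add]
      congr 1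
      grind

theorem dist_antipodalOrder_succ {j : ℕ} (h : Odd n ∨ Even j) :
    (cycleGraphZMod n).dist (antipodalOrder n j) (antipodalOrder n (j + 1)) = n / 2 := by
  rw [SimpleGraph.dist_comm]
  exact dist_of_eq_add_natCast le_rfl (antipodalOrder_eq_succ_add h)

theorem image_antipodalOrder_Ico (s : ℕ) :
    (Ico s (s + n)).image (antipodalOrder n) = univ := by
  have hmod : (Ico s (s + n)).image (antipodalOrder n) = (range n).image (antipodalOrder n) := by
    rw [← Nat.image_Ico_mod s n, image_image]
    exact image_congr fun j _ => by simp [antipodalOrder]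
  rw [hmod, eq_univ_iff_forall]
  intro v
  have hv := v.val_lt
  rw [mem_image]
  rcases lt_or_ge v.val (n - n / 2) with hlow | hhigh
  · refine ⟨2 * v.val, Finset.mem_range.mpr (by omega), ?_⟩
    rw [antipodalOrder_of_mod_eq_two_mul (Nat.mod_eq_of_lt (by omega)), ZMod.natCast_zmod_val]
  · refine ⟨2 * (v.val - (n - n / 2)) + 1, Finset.mem_range.mpr (by omega), ?_⟩
    rw [antipodalOrder_of_mod_eq_two_mul_add_one (Nat.mod_eq_of_lt (by omega)),
      Nat.add_sub_cancel' hhigh, ZMod.natCast_zmod_val]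

theorem injOn_antipodalOrder_Ico (s : ℕ) : Set.InjOn (antipodalOrder n) (Ico s (s + n)) := by
  rw [← card_image_iff, image_antipodalOrder_Ico]
  simp [ZMod.card]

theorem bijective_antipodalOrder_val :
    Function.Bijective fun j : Fin n => antipodalOrder n j := by
  rw [Fintype.bijective_iff_injective_and_card, Fintype.card_fin, ZMod.card]
  exact ⟨fun i j hij => Fin.ext (injOn_antipodalOrder_Ico 0 (by simp) (by simp) hij), rfl⟩

theorem card_image_antipodalOrder_Ico {s m : ℕ} (hm : m ≤ n) :
    #((Ico s (s + m)).image (antipodalOrder n)) = m := by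
  rw [card_image_of_injOn ((injOn_antipodalOrder_Ico s).mono (by grind)), Nat.card_Ico,
    Nat.add_sub_cancel_left]

theorem compl_image_antipodalOrder_Ico {s m : ℕ} (hm : m ≤ n) :
    ((Ico s (s + m)).image (antipodalOrder n))ᶜ =
      (Ico (s + m) (s + m + (n - m))).image (antipodalOrder n) := by
  have hsub : Ico s (s + m) ⊆ Ico s (s + n) := Ico_subset_Ico_right (by omega)
  have hdiff : Ico s (s + n) \ Ico s (s + m) = Ico (s + m) (s + m + (n - m)) := by grind
  rw [compl_eq_univ_sdiff, ← image_antipodalOrder_Ico s, ← hdiff,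
    image_sdiff_of_injOn (injOn_antipodalOrder_Ico s) hsub]

theorem halfArcBalanced_image_antipodalOrder_Ico {s m : ℕ} (hm : m ≤ n)
    (h : Odd n ∨ Even s ∨ Odd m) :
    HalfArcBalanced ((Ico s (s + m)).image (antipodalOrder n)) := fun y => by
  obtain ⟨d, hd, hsd⟩ : ∃ d, (∀ j, Even (j + d) → Odd n ∨ Even j) ∧ (Even (s + d) ∨ Odd m) := by
    rcases h with hn | h
    · exact ⟨s, fun _ _ => Or.inl hn, Or.inl (Even.add_self s)⟩
    · exact ⟨0, fun _ => Or.inr, h⟩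
  have hantipodal (j : ℕ) (hj : Even (j + d)) (hmem : antipodalOrder n j ∈ halfArc n y) :
      antipodalOrder n (j + 1) ∉ halfArc n y :=
    encodesDist_halfArc.notMem_of_dist_eq (dist_antipodalOrder_succ (hd j hj)) hmem
  rw [card_image_antipodalOrder_Ico hm, ← filter_mem_eq_inter, filter_image]
  exact card_image_le.trans (card_filter_Ico_le_half hantipodal hsd)

theorem wienerSet_image_antipodalOrder_Ico {s m : ℕ} (hm : m ≤ n) (h : Even s ∨ Odd m) :
    wienerSet (cycleGraphZMod n) ((Ico s (s + m)).image (antipodalOrder n)) = maxWiener n m := by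
  have hbalanced := halfArcBalanced_image_antipodalOrder_Ico (s := s) hm (Or.inr h)
  have hbalanced_compl := halfArcBalanced_image_antipodalOrder_Ico (n := n) (s := s + m)
    (Nat.sub_le n m) (by grind)
  rw [← compl_image_antipodalOrder_Ico hm] at hbalanced_compl
  rw [hbalanced.wienerSet_eq_maxWiener hbalanced_compl, card_image_antipodalOrder_Ico hm]

end AntipodalOrder

section Coloring

theorem card_colorClass_comp_perm {V : Type*} [Fintype V] {k : ℕ} (f : V → Fin k)
    (π : Equiv.Perm V) (i : Fin k) : #(colorClass (f ∘ π) i) = #(colorClass f i) :=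
  card_equiv π (by simp [colorClass])

theorem colorType_comp_perm {V : Type*} [Fintype V] {k : ℕ} (f : V → Fin k)
    (π : Equiv.Perm V) : colorType (f ∘ π) = colorType f := by
  simp only [colorType, card_colorClass_comp_perm]

theorem le_card_of_mem_colorType {V : Type*} [Fintype V] {k : ℕ} {f : V → Fin k} {m : ℕ}
    (hm : m ∈ colorType f) : m ≤ Fintype.card V := by
  obtain ⟨i, -, rfl⟩ := Multiset.mem_map.mp hm
  exact card_le_univ _

theorem sum_map_colorType {V M : Type*} [Fintype V] [AddCommMonoid M] {k : ℕ} (f : V → Fin k)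
    (F : ℕ → M) : ((colorType f).map F).sum = ∑ i, F #(colorClass f i) := by
  rw [colorType, Multiset.map_map]
  rfl

variable {n : ℕ} [NeZero n]

theorem exists_perm_fiber_eq_image_antipodalOrder_Ico {β : Type*} [LinearOrder β]
    (f : ZMod n → β) :
    ∃ π : Equiv.Perm (ZMod n), ∀ a, ({v | f (π v) = a} : Finset (ZMod n)) =
      (Ico #{v | f v < a} (#{v | f v < a} + #{v | f v = a})).image (antipodalOrder n) := by
  let w : Fin n ≃ ZMod n := Equiv.ofBijective _ bijective_antipodalOrder_val
  let σ : Equiv.Perm (Fin n) := Tuple.sort (f ∘ w)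
  have hmono : Monotone fun j => f (w (σ j)) := Tuple.monotone_sort (f ∘ w)
  refine ⟨w.symm.trans (σ.trans w), fun a => ?_⟩
  have card_filter (p : β → Prop) [DecidablePred p] : #{v | p (f v)} = #{j | p (f (w (σ j)))} :=
    (card_equiv (σ.trans w) (by simp)).symm
  rw [card_filter (· < a), card_filter (· = a), ← image_val_filter_eq_Ico_of_monotone hmono a,
    image_image]
  ext v
  obtain ⟨j, rfl⟩ := w.surjective v
  have hw (i : Fin n) : antipodalOrder n i = w i := rfl
  simp only [mem_image, mem_filter, mem_univ, true_and]
  simp [hw]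

theorem exists_perm_wienerSet_eq_maxWiener {k : ℕ} (f : ZMod n → Fin k) :
    ∃ π : Equiv.Perm (ZMod n), ∀ i,
      wienerSet (cycleGraphZMod n) (colorClass (f ∘ π) i) = maxWiener n #(colorClass f i) := by
  -- Sorting by this key places the even classes first, so each of them starts at an even position.
  let key (i : Fin k) : ℕ ×ₗ Fin k := toLex (#(colorClass f i) % 2, i)
  have hkey : key.Injective := fun i j hij => (Prod.ext_iff.mp (toLex.injective hij)).2
  have filter_key (c : ZMod n → Fin k) (i : Fin k) :
      ({v | key (c v) = key i} : Finset (ZMod n)) = colorClass c i := by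
    simp [colorClass, hkey.eq_iff]
  obtain ⟨π, hπ⟩ := exists_perm_fiber_eq_image_antipodalOrder_Ico (key ∘ f)
  refine ⟨π, fun i => ?_⟩
  have hinterval := hπ (key i)
  simp only [Function.comp_apply, filter_key f] at hinterval
  rw [← filter_key, Function.comp_def, hinterval]
  refine wienerSet_image_antipodalOrder_Ico ((card_le_univ _).trans_eq (ZMod.card n)) ?_
  rw [or_iff_not_imp_right, Nat.not_odd_iff_even]
  intro heven
  refine even_card_filter_lt fun v hv => ?_
  rw [filter_key]
  have hle : #(colorClass f (f v)) % 2 ≤ #(colorClass f i) % 2 := Prod.Lex.monotone_fst _ _ hv.le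
  grind

theorem cycle_majorization_le_general (n k : ℕ) [NeZero n] (f g : ZMod n → Fin k)
    (hf : ∀ π : Equiv.Perm (ZMod n),
      wienerColoring (cycleGraphZMod n) (f ∘ π) ≤ wienerColoring (cycleGraphZMod n) f)
    (hmaj : MajorizedBy (colorType g) (colorType f)) :
    wienerColoring (cycleGraphZMod n) g ≤ wienerColoring (cycleGraphZMod n) f := by
  have le_of_mem {c : ZMod n → Fin k} (m : ℕ) (hm : m ∈ colorType c) : m ≤ n :=
    (le_card_of_mem_colorType hm).trans_eq (ZMod.card n)
  have hkaramata : ∑ i, maxWiener n #(colorClass g i) ≤ ∑ i, maxWiener n #(colorClass f i) := by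
    have hsum := hmaj.sum_map_le_sum_map (F := fun m => (maxWiener n m : ℤ))
      (fun _ => maxWiener_convex) le_of_mem le_of_mem
    rw [sum_map_colorType, sum_map_colorType] at hsum
    exact_mod_cast hsum
  obtain ⟨π, hπ⟩ := exists_perm_wienerSet_eq_maxWiener f
  calc wienerColoring (cycleGraphZMod n) g
      ≤ ∑ i, maxWiener n #(colorClass g i) := sum_le_sum fun i _ => wienerSet_le_maxWiener _
    _ ≤ ∑ i, maxWiener n #(colorClass f i) := hkaramata
    _ = wienerColoring (cycleGraphZMod n) (f ∘ π) := sum_congr rfl fun i _ => (hπ i).symm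
    _ ≤ wienerColoring (cycleGraphZMod n) f := hf π

end Coloring

/-- If `f, g` are `k`-color weak maximizers of `W` on `C_n` and `type(g) ≺ type(f)`,
then `W(g) ≤ W(f)`. -/
theorem cycle_majorization_le (n k : ℕ) [NeZero n] (f g : ZMod n → Fin k)
    (hf : IsWeakMaximizer (cycleGraphZMod n) f)
    (hg : IsWeakMaximizer (cycleGraphZMod n) g)
    (hmaj : MajorizedBy (colorType g) (colorType f)) :
    wienerColoring (cycleGraphZMod n) g ≤ wienerColoring (cycleGraphZMod n) f :=
  cycle_majorization_le_general n k f g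
    (fun π => hf.2 (f ∘ π) (hf.1.comp π.surjective) (colorType_comp_perm f π)) hmaj
end
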